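/- Let h, k ∈ M₊ have equal central support, with k properly infinite and h a countable sum of finite positive elements. Then h ≲ k in the Kadison–Pedersen ordering, i.e., h ≈ k' for some k' ≤ k. -/

import Mathlib

open ContinuousLinearMap Filter Topology

universe u

noncomputable section

variable {H : Type u} [NormedAddCommGroup H] [InnerProductSpace ℂ H] [CompleteSpace H]

/-- `p` is an (orthogonal) projection belonging to the von Neumann algebra `M`. -/
def IsProjIn (M : VonNeumannAlgebra H) (p : H →L[ℂ] H) : Prop :=
  p ∈ M ∧ IsSelfAdjoint p ∧ p * p = p

/-- Murray–von Neumann equivalence of `p` and `q` relative to `M`: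
there is a partial isometry `v ∈ M` with `v* v = p` and `v v* = q`. -/
def MvNEquiv (M : VonNeumannAlgebra H) (p q : H →L[ℂ] H) : Prop :=
  ∃ v ∈ M, adjoint v * v = p ∧ v * adjoint v = q

/-- The order on projections: `p ≤ q` iff `p q = p = q p`. -/
def ProjLE (p q : H →L[ℂ] H) : Prop := p * q = p ∧ q * p = p

/-- Murray–von Neumann subequivalence `p ≼ q`: `p` is equivalent to a subprojection of `q`. -/
def SubEquiv (M : VonNeumannAlgebra H) (p q : H →L[ℂ] H) : Prop :=
  ∃ r, IsProjIn M r ∧ MvNEquiv M p r ∧ ProjLE r q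

/-- `z` is a central projection of `M`. -/
def IsCentralProj (M : VonNeumannAlgebra H) (z : H →L[ℂ] H) : Prop :=
  IsProjIn M z ∧ ∀ x ∈ M, z * x = x * z

/-- A projection `p` is finite: `p ∼ q ≤ p` implies `q = p`. -/
def FiniteProj (M : VonNeumannAlgebra H) (p : H →L[ℂ] H) : Prop :=
  ∀ q, IsProjIn M q → ProjLE q p → MvNEquiv M p q → q = p

/-- A projection `p` is properly infinite: it is a countably infinite sum of pairwise
orthogonal projections, each equivalent to `p`. -/
def ProperlyInfiniteProj (M : VonNeumannAlgebra H) (p : H →L[ℂ] H) : Prop :=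
  p ≠ 0 ∧ ∃ e : ℕ → H →L[ℂ] H, (∀ n, IsProjIn M (e n)) ∧
    (Pairwise fun m n => e m * e n = 0) ∧ (∀ n, MvNEquiv M (e n) p) ∧
    ∀ ξ : H, HasSum (fun n => e n ξ) (p ξ)

/-- `z` is the central support of `h`: the smallest central projection with `z h = h`. -/
def IsCentralSupport (M : VonNeumannAlgebra H) (h z : H →L[ℂ] H) : Prop :=
  IsCentralProj M z ∧ z * h = h ∧ ∀ w, IsCentralProj M w → w * h = h → z * w = z

/-- The projection `e` is σ-finite relative to `M`: every family of pairwise orthogonal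
nonzero subprojections of `e` in `M` is countable. -/
def SigmaFiniteProj (M : VonNeumannAlgebra H) (e : H →L[ℂ] H) : Prop :=
  ∀ S : Set (H →L[ℂ] H), (∀ q ∈ S, IsProjIn M q ∧ q ≠ 0 ∧ ProjLE q e) →
    (S.Pairwise fun a b => a * b = 0) → S.Countable

/-- Kadison–Pedersen equivalence on the positive cone: `h ≈ k` iff there is a family
`{x_α} ⊆ M` with `h = Σ x_α* x_α` and `k = Σ x_α x_α*` (sums in the strong topology). -/
def KPEquiv (M : VonNeumannAlgebra H) (h k : H →L[ℂ] H) : Prop :=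
  ∃ (ι : Type u) (x : ι → H →L[ℂ] H), (∀ i, x i ∈ M) ∧
    (∀ ξ : H, HasSum (fun i => (adjoint (x i) * x i) ξ) (h ξ)) ∧
    (∀ ξ : H, HasSum (fun i => (x i * adjoint (x i)) ξ) (k ξ))

/-- Operator order: `a ≤ b` iff `b - a` is positive. -/
def OpLE (a b : H →L[ℂ] H) : Prop := (b - a).IsPositive

/-- `h ∈ M₊` is finite in the Kadison–Pedersen sense: `h ≈ k ≤ h` implies `k = h`. -/
def KPFinite (M : VonNeumannAlgebra H) (h : H →L[ℂ] H) : Prop :=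
  ∀ k, k ∈ M → k.IsPositive → OpLE k h → KPEquiv M h k → k = h

/-- `h ∈ M₊` is properly infinite: `z h` is finite and nonzero for no central projection `z`. -/
def KPProperlyInfinite (M : VonNeumannAlgebra H) (h : H →L[ℂ] H) : Prop :=
  h ≠ 0 ∧ ∀ z, IsCentralProj M z → KPFinite M (z * h) → z * h = 0

/-- The set of projections of `M`. -/
def ProjSet (M : VonNeumannAlgebra H) := {p : H →L[ℂ] H // IsProjIn M p}

/-- The strong operator topology on the projections of `M` (topology of pointwise convergence). -/
instance (M : VonNeumannAlgebra H) : TopologicalSpace (ProjSet M) :=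
  TopologicalSpace.induced (fun p : ProjSet M => (fun ξ => p.1 ξ : H → H)) inferInstance

/-- The quotient `P(M)/∼` of the projections of `M` by Murray–von Neumann equivalence,
carrying the quotient (strong operator) topology. -/
abbrev PQuot (M : VonNeumannAlgebra H) :=
  Quot (fun p q : ProjSet M => MvNEquiv M p.1 q.1)

/-- The quotient map `P(M) → P(M)/∼`. -/
def pquotMk (M : VonNeumannAlgebra H) : ProjSet M → PQuot M := Quot.mk _

/-- The strong operator topology on `B(H)`. -/
def SOT : TopologicalSpace (H →L[ℂ] H) :=
  TopologicalSpace.induced (fun a : H →L[ℂ] H => (fun ξ => a ξ : H → H)) inferInstance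

/-- The order induced on `P(M)/∼` by Murray–von Neumann subequivalence. -/
def QLE (M : VonNeumannAlgebra H) (a b : PQuot M) : Prop :=
  ∃ p q : ProjSet M, a = pquotMk M p ∧ b = pquotMk M q ∧ SubEquiv M p.1 q.1

/-!
Comparison: a maximal family in `M` with `∑ xᵢ* xᵢ ≤ h` and `∑ xᵢ xᵢ* ≤ k` yields `a ≤ h`, `b ≤ k`
with `a ≈ b`. By maximality `(h - a) M (k - b) = 0`, so a central projection `p` separates the two
remainders: `p h = p a` and `(1 - p) k = (1 - p) b`.

If `h` is finite, then `(1 - p) k = (1 - p) b ≈ (1 - p) a ≤ h` is finite, hence zero when `k` is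
properly infinite. Thus `p k = k`, and since the central support of `h` is below that of `k`, also
`h = p h = p a ≈ p b ≤ k`. For a countable sum `h = ∑ fₙ` of finite elements, apply this to each
`fₙ` and the properly infinite `2⁻⁽ⁿ⁺¹⁾ k`, and add up.

That finiteness passes along `≈` rests on two facts proved from polar decomposition: `≈` is
transitive, and a decomposition of one side of `g ≈ k₁ + k₂` can be transported to the other.
-/

/-- The quadratic form `ξ ↦ ⟨a ξ, ξ⟩` of an operator, valued in `[0, ∞]` so that sums of forms can
be rearranged freely. Negative values are truncated to `0`, so it is meant for positive `a`. -/
def quadForm (a : H →L[ℂ] H) (ξ : H) : ENNReal :=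
  ENNReal.ofReal (a.reApplyInnerSelf ξ)

section QuadForm

section NoCompleteness

omit [CompleteSpace H]

lemma quadForm_ne_top (a : H →L[ℂ] H) (ξ : H) : quadForm a ξ ≠ ⊤ :=
  ENNReal.ofReal_ne_top

lemma quadForm_zero_left (ξ : H) : quadForm (0 : H →L[ℂ] H) ξ = 0 := by
  simp [quadForm, reApplyInnerSelf_apply]

lemma quadForm_add {a b : H →L[ℂ] H} (ha : a.IsPositive) (hb : b.IsPositive) (ξ : H) :
    quadForm (a + b) ξ = quadForm a ξ + quadForm b ξ := by
  rw [quadForm, quadForm, quadForm, ← ENNReal.ofReal_add (ha.2 ξ) (hb.2 ξ)]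
  simp only [reApplyInnerSelf_apply, add_apply, inner_add_left, map_add]

lemma quadForm_smul {c : ℝ} (hc : 0 ≤ c) (a : H →L[ℂ] H) (ξ : H) :
    quadForm ((c : ℂ) • a) ξ = ENNReal.ofReal c * quadForm a ξ := by
  rw [quadForm, quadForm, ← ENNReal.ofReal_mul hc, reApplyInnerSelf_apply, reApplyInnerSelf_apply,
    smul_apply, inner_smul_left, Complex.conj_ofReal]
  exact congrArg ENNReal.ofReal (Complex.re_ofReal_mul _ _)

open scoped ComplexOrder in
lemma isPositive_ofReal_smul {c : ℝ} (hc : 0 ≤ c) {a : H →L[ℂ] H} (ha : a.IsPositive) :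
    ((c : ℂ) • a).IsPositive :=
  ha.smul_of_nonneg (Complex.zero_le_real.2 hc)

lemma quadForm_add_quadForm_sub {a b : H →L[ℂ] H} (ha : a.IsPositive) (hab : a ≤ b) (ξ : H) :
    quadForm a ξ + quadForm (b - a) ξ = quadForm b ξ := by
  rw [← quadForm_add ha hab, add_sub_cancel]

lemma quadForm_mono {a b : H →L[ℂ] H} (hab : a ≤ b) (ξ : H) : quadForm a ξ ≤ quadForm b ξ := by
  refine ENNReal.ofReal_le_ofReal (sub_nonneg.1 ?_)
  simpa only [reApplyInnerSelf_apply, sub_apply, inner_sub_left, map_sub] using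
    (le_def a b).1 hab |>.re_inner_nonneg_left ξ

lemma quadForm_le_nnnorm (a : H →L[ℂ] H) (ξ : H) : quadForm a ξ ≤ ‖a‖₊ * ‖ξ‖ₑ ^ 2 := by
  have hre : a.reApplyInnerSelf ξ ≤ ‖a‖ * ‖ξ‖ ^ 2 := calc
    a.reApplyInnerSelf ξ ≤ ‖inner ℂ (a ξ) ξ‖ := RCLike.re_le_norm _
    _ ≤ ‖a ξ‖ * ‖ξ‖ := norm_inner_le_norm _ _
    _ ≤ ‖a‖ * ‖ξ‖ * ‖ξ‖ := by gcongr; exact a.le_opNorm ξ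
    _ = ‖a‖ * ‖ξ‖ ^ 2 := by ring
  refine (ENNReal.ofReal_le_ofReal hre).trans_eq ?_
  rw [ENNReal.ofReal_mul (norm_nonneg _), ENNReal.ofReal_pow (norm_nonneg _), ofReal_norm,
    ofReal_norm, enorm_eq_nnnorm]

end NoCompleteness

lemma le_of_quadForm_le {a b : H →L[ℂ] H} (ha : a.IsPositive) (hb : b.IsPositive)
    (h : ∀ ξ, quadForm a ξ ≤ quadForm b ξ) : a ≤ b := by
  refine isPositive_def'.2 ⟨hb.isSelfAdjoint.sub ha.isSelfAdjoint, fun ξ => ?_⟩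
  have hre := (ENNReal.ofReal_le_ofReal_iff (hb.2 ξ)).1 (h ξ)
  simpa only [reApplyInnerSelf_apply, sub_apply, inner_sub_left, map_sub, sub_nonneg] using hre

lemma eq_of_quadForm_eq {a b : H →L[ℂ] H} (ha : a.IsPositive) (hb : b.IsPositive)
    (h : ∀ ξ, quadForm a ξ = quadForm b ξ) : a = b :=
  le_antisymm (le_of_quadForm_le ha hb fun ξ => (h ξ).le)
    (le_of_quadForm_le hb ha fun ξ => (h ξ).ge)

lemma quadForm_adjoint_mul_self (x : H →L[ℂ] H) (ξ : H) :
    quadForm (adjoint x * x) ξ = ‖x ξ‖ₑ ^ 2 := by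
  rw [quadForm, reApplyInnerSelf_apply, mul_apply_eq_comp, adjoint_inner_left,
    inner_self_eq_norm_sq, ENNReal.ofReal_pow (norm_nonneg _), ofReal_norm]

lemma quadForm_mul_mul_adjoint (v a : H →L[ℂ] H) (ξ : H) :
    quadForm (v * a * adjoint v) ξ = quadForm a (adjoint v ξ) := by
  rw [quadForm, quadForm, reApplyInnerSelf_apply, reApplyInnerSelf_apply, mul_apply_eq_comp,
    mul_apply_eq_comp, ← adjoint_inner_right]

lemma adjoint_mul (x y : H →L[ℂ] H) : adjoint (x * y) = adjoint y * adjoint x :=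
  adjoint_comp x y

lemma adjoint_sqrt (a : H →L[ℂ] H) : adjoint (CFC.sqrt a) = CFC.sqrt a :=
  ((nonneg_iff_isPositive _).1 (CFC.sqrt_nonneg a)).isSelfAdjoint

lemma adjoint_sqrt_mul_sqrt {a : H →L[ℂ] H} (ha : a.IsPositive) :
    adjoint (CFC.sqrt a) * CFC.sqrt a = a := by
  rw [adjoint_sqrt, CFC.sqrt_mul_sqrt_self a ((nonneg_iff_isPositive a).2 ha)]

lemma enorm_sqrt_apply_sq {a : H →L[ℂ] H} (ha : a.IsPositive) (ξ : H) :
    ‖CFC.sqrt a ξ‖ₑ ^ 2 = quadForm a ξ := by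
  rw [← quadForm_adjoint_mul_self, adjoint_sqrt_mul_sqrt ha]

end QuadForm

section Column

variable {𝕜 E F ι : Type*} [RCLike 𝕜] [NormedAddCommGroup E] [NormedAddCommGroup F]

lemma lp_tsum_enorm_sq (f : lp (fun _ : ι => F) 2) : ∑' i, ‖f i‖ₑ ^ 2 = ‖f‖ₑ ^ 2 := by
  have hf := lp.hasSum_norm (p := 2) (by norm_num) f
  simp only [ENNReal.toReal_ofNat, Real.rpow_ofNat] at hf
  simp only [← ofReal_norm, ← ENNReal.ofReal_pow (norm_nonneg _)]
  rw [← hf.tsum_eq, ENNReal.ofReal_tsum_of_nonneg (fun i => by positivity) hf.summable]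

lemma exists_column [NormedSpace 𝕜 E] [NormedSpace 𝕜 F] {x : ι → E →L[𝕜] F} (C : NNReal)
    (hx : ∀ ξ, ∑' i, ‖x i ξ‖ₑ ^ 2 ≤ C * ‖ξ‖ₑ ^ 2) :
    ∃ X : E →L[𝕜] lp (fun _ : ι => F) 2, ∀ ξ i, X ξ i = x i ξ := by
  have hsum_le (ξ : E) (s : Finset ι) : ∑ i ∈ s, ‖x i ξ‖ ^ 2 ≤ C * ‖ξ‖ ^ 2 := by
    have h : ∑ i ∈ s, ‖x i ξ‖₊ ^ 2 ≤ C * ‖ξ‖₊ ^ 2 := by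
      have := (ENNReal.sum_le_tsum s).trans (hx ξ)
      simp only [enorm_eq_nnnorm] at this
      exact_mod_cast this
    simpa using NNReal.coe_le_coe.2 h
  have hmem (ξ : E) : Memℓp (fun i => x i ξ) 2 :=
    memℓp_gen' (C := C * ‖ξ‖ ^ 2) (by simpa using hsum_le ξ)
  let X : E →ₗ[𝕜] lp (fun _ : ι => F) 2 :=
    { toFun := fun ξ => ⟨fun i => x i ξ, hmem ξ⟩
      map_add' := fun ξ η => by ext i; exact (x i).map_add ξ η
      map_smul' := fun c ξ => by ext i; exact (x i).map_smul c ξ }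
  refine ⟨X.mkContinuous (Real.sqrt C) fun ξ => ?_, fun ξ i => rfl⟩
  refine lp.norm_le_of_forall_sum_le (by norm_num) (by positivity) fun s => ?_
  simpa [mul_pow, X] using hsum_le ξ s

lemma hasSum_adjoint_apply_column [InnerProductSpace 𝕜 E] [InnerProductSpace 𝕜 F]
    [CompleteSpace E] [CompleteSpace F] {x : ι → E →L[𝕜] F} {X : E →L[𝕜] lp (fun _ : ι => F) 2}
    (hX : ∀ ξ i, X ξ i = x i ξ) (ξ : E) :
    HasSum (fun i => adjoint (x i) (x i ξ)) (adjoint X (X ξ)) := by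
  classical
  convert (lp.hasSum_single (p := 2) (by norm_num) (X ξ)).mapL (adjoint X) using 2 with i
  refine ext_inner_right 𝕜 fun η => ?_
  rw [adjoint_inner_left, adjoint_inner_left, lp.inner_single_left, hX, hX]

end Column

section PositiveSums

variable {ι : Type*} {a : ι → H →L[ℂ] H}

lemma exists_hasSum_of_tsum_quadForm_le (ha : ∀ i, (a i).IsPositive) (b : H →L[ℂ] H)
    (hab : ∀ ξ, ∑' i, quadForm (a i) ξ ≤ quadForm b ξ) :
    ∃ s : H →L[ℂ] H, s.IsPositive ∧ ∀ ξ, HasSum (fun i => a i ξ) (s ξ) := by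
  obtain ⟨X, hX⟩ := exists_column (x := fun i => CFC.sqrt (a i)) ‖b‖₊ fun ξ => by
    simp only [enorm_sqrt_apply_sq (ha _)]
    exact (hab ξ).trans (quadForm_le_nnnorm b ξ)
  refine ⟨adjoint X ∘L X, isPositive_adjoint_comp_self X, fun ξ => ?_⟩
  convert! hasSum_adjoint_apply_column hX ξ using 2 with i
  rw [← mul_apply_eq_comp, adjoint_sqrt_mul_sqrt (ha i)]

omit [CompleteSpace H] in
lemma tsum_quadForm_of_hasSum {s : H →L[ℂ] H} (ha : ∀ i, (a i).IsPositive)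
    (hs : ∀ ξ, HasSum (fun i => a i ξ) (s ξ)) (ξ : H) :
    ∑' i, quadForm (a i) ξ = quadForm s ξ := by
  have hre : HasSum (fun i => (a i).reApplyInnerSelf ξ) (s.reApplyInnerSelf ξ) := by
    convert! ((hs ξ).mapL (innerSL ℂ ξ)).mapL Complex.reCLM using 2 with i
    · exact inner_re_symm (𝕜 := ℂ) _ _
    · exact inner_re_symm (𝕜 := ℂ) _ _
  rw [quadForm, ← hre.tsum_eq, ENNReal.ofReal_tsum_of_nonneg (fun i => (ha i).2 ξ) hre.summable]
  rfl

lemma hasSum_iff_tsum_quadForm {s : H →L[ℂ] H} (ha : ∀ i, (a i).IsPositive) (hs : s.IsPositive) :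
    (∀ ξ, HasSum (fun i => a i ξ) (s ξ)) ↔ ∀ ξ, ∑' i, quadForm (a i) ξ = quadForm s ξ := by
  refine ⟨fun h => tsum_quadForm_of_hasSum ha h, fun h => ?_⟩
  obtain ⟨s', hs', hsum⟩ := exists_hasSum_of_tsum_quadForm_le ha s fun ξ => (h ξ).le
  have : s' = s := eq_of_quadForm_eq hs' hs fun ξ => by
    rw [← tsum_quadForm_of_hasSum ha hsum, h]
  exact this ▸ hsum

end PositiveSums

section PolarDecomposition

variable {𝕜 E F G : Type*} [RCLike 𝕜] [NormedAddCommGroup E] [NormedSpace 𝕜 E]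
  [NormedAddCommGroup F] [InnerProductSpace 𝕜 F] [CompleteSpace F]
  [NormedAddCommGroup G] [NormedSpace 𝕜 G]

lemma eq_of_eqOn_range_of_eqOn_orthogonal_range {r : E →L[𝕜] F} {A B : F →L[𝕜] G}
    (hrange : ∀ ξ, A (r ξ) = B (r ξ)) (horth : ∀ η ∈ r.rangeᗮ, A η = B η) : A = B := by
  let K := r.range.topologicalClosure
  have : CompleteSpace K := (Submodule.isClosed_topologicalClosure _).completeSpace_coe
  refine LinearMap.ext_on_codisjoint (Submodule.isCompl_orthogonal (K := K)).codisjoint ?_ ?_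
  · refine Set.EqOn.closure ?_ A.continuous B.continuous
    rintro _ ⟨ξ, rfl⟩
    exact hrange ξ
  · rw [Submodule.orthogonal_closure]
    exact horth

lemma exists_partialIsometry_of_norm_eq [CompleteSpace G] {r : E →L[𝕜] F} {X : E →L[𝕜] G}
    (hX : ∀ ξ, ‖X ξ‖ = ‖r ξ‖) :
    ∃ V : F →L[𝕜] G, (∀ ξ, V (r ξ) = X ξ) ∧ (∀ η ∈ r.rangeᗮᗮ, ‖V η‖ = ‖η‖) ∧
      ∀ η ∈ r.rangeᗮ, V η = 0 := by
  let K := r.range.topologicalClosure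
  have : CompleteSpace K := (Submodule.isClosed_topologicalClosure _).completeSpace_coe
  let e : E →ₗ[𝕜] K := (r : E →ₗ[𝕜] F).codRestrict K fun ξ =>
    Submodule.le_topologicalClosure _ ⟨ξ, rfl⟩
  have he : DenseRange e := by
    intro y
    rw [closure_subtype]
    refine closure_mono ?_ y.2
    rintro _ ⟨ξ, rfl⟩
    exact ⟨e ξ, ⟨ξ, rfl⟩, rfl⟩
  let V₀ : K →L[𝕜] G := (X : E →ₗ[𝕜] G).extendOfNorm e
  have hV₀ (ξ : E) : V₀ (e ξ) = X ξ :=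
    LinearMap.extendOfNorm_eq he ⟨1, fun ξ => by rw [one_mul]; exact (hX ξ).le⟩ ξ
  have hnorm (y : K) : ‖V₀ y‖ = ‖y‖ := by
    refine he.induction_on (p := fun y => ‖V₀ y‖ = ‖y‖) y
      (isClosed_eq (by fun_prop) (by fun_prop)) fun ξ => ?_
    rw [hV₀, hX]
    rfl
  have hproj (y : K) : K.orthogonalProjectionOnto (y : F) = y :=
    K.orthogonalProjectionOnto_mem_subspace_eq_self y
  refine ⟨V₀ ∘L K.orthogonalProjectionOnto, fun ξ => ?_, fun η hη => ?_, fun η hη => ?_⟩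
  · exact (congrArg V₀ (hproj (e ξ))).trans (hV₀ ξ)
  · rw [Submodule.orthogonal_orthogonal_eq_closure] at hη
    exact (congrArg (‖V₀ ·‖) (hproj ⟨η, hη⟩)).trans (hnorm _)
  · rw [← Submodule.orthogonal_closure] at hη
    rw [comp_apply, Submodule.orthogonalProjectionOnto_eq_zero_iff.2 hη, map_zero]

end PolarDecomposition

section VonNeumannAlgebra

variable {M : VonNeumannAlgebra H}

section Membership

lemma mem_of_forall_commutant {x : H →L[ℂ] H} (h : ∀ n ∈ M.commutant, n * x = x * n) :
    x ∈ M := by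
  rw [← M.commutant_commutant]
  exact VonNeumannAlgebra.mem_commutant_iff.2 h

lemma commutant_mul_comm {x n : H →L[ℂ] H} (hx : x ∈ M) (hn : n ∈ M.commutant) :
    n * x = x * n :=
  (VonNeumannAlgebra.mem_commutant_iff.1 hn x hx).symm

lemma adjoint_mem {x : H →L[ℂ] H} (hx : x ∈ M) : adjoint x ∈ M :=
  star_mem (s := M) hx

lemma sqrt_mem {a : H →L[ℂ] H} (ha : a ∈ M) : CFC.sqrt a ∈ M :=
  mem_of_forall_commutant fun _ hn =>
    (Commute.cfcₙ_nnreal (commutant_mul_comm ha hn).symm _).symm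

lemma mem_of_hasSum {ι : Type*} {y : ι → H →L[ℂ] H} {s : H →L[ℂ] H} (hy : ∀ i, y i ∈ M)
    (hs : ∀ ξ, HasSum (fun i => y i ξ) (s ξ)) : s ∈ M := by
  refine mem_of_forall_commutant fun n hn => ?_
  ext ξ
  have hcomm (i : ι) : n (y i ξ) = y i (n ξ) := congr($(commutant_mul_comm (hy i) hn) ξ)
  exact ((hs ξ).mapL n).unique ((hs (n ξ)).congr_fun hcomm)

lemma exists_mem_tsum_quadForm_eq {ι : Type*} {a : ι → H →L[ℂ] H} (haM : ∀ i, a i ∈ M)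
    (ha : ∀ i, (a i).IsPositive) {b : H →L[ℂ] H} (hb : b.IsPositive)
    (hab : ∀ ξ, ∑' i, quadForm (a i) ξ ≤ quadForm b ξ) :
    ∃ s ∈ M, s.IsPositive ∧ s ≤ b ∧ ∀ ξ, ∑' i, quadForm (a i) ξ = quadForm s ξ := by
  obtain ⟨s, hs, hsum⟩ := exists_hasSum_of_tsum_quadForm_le ha b hab
  have hq := tsum_quadForm_of_hasSum ha hsum
  exact ⟨s, mem_of_hasSum haM hsum, hs, le_of_quadForm_le hs hb fun ξ => hq ξ ▸ hab ξ, hq⟩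

-- A commutant element preserves both the range of `r` and its orthogonal complement.
lemma mem_of_mul_mem_of_eq_zero_on_orthogonal {r w : H →L[ℂ] H} (hr : r ∈ M) (hwr : w * r ∈ M)
    (hw : ∀ η ∈ r.rangeᗮ, w η = 0) : w ∈ M := by
  refine mem_of_forall_commutant fun n hn => ?_
  refine eq_of_eqOn_range_of_eqOn_orthogonal_range (r := r) (fun ξ => ?_) fun η hη => ?_
  · have hr' : n (r ξ) = r (n ξ) := congr($(commutant_mul_comm hr hn) ξ)
    have hwr' : n (w (r ξ)) = w (r (n ξ)) := congr($(commutant_mul_comm hwr hn) ξ)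
    rw [mul_apply_eq_comp, mul_apply_eq_comp, hr', hwr']
  · have hrn : adjoint r (n η) = n (adjoint r η) :=
      congr($(commutant_mul_comm (adjoint_mem hr) hn) η).symm
    have hnη : n η ∈ r.rangeᗮ := by
      rw [orthogonal_range, LinearMap.mem_ker] at hη ⊢
      exact hrn.trans ((congrArg n hη).trans (map_zero n))
    rw [mul_apply_eq_comp, mul_apply_eq_comp, hw η hη, hw _ hnη, map_zero]

end Membership

section Equivalence

lemma hasSum_adjoint_mul_self_iff {ι : Type*} (x : ι → H →L[ℂ] H) {h : H →L[ℂ] H}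
    (hh : h.IsPositive) :
    (∀ ξ, HasSum (fun i => (adjoint (x i) * x i) ξ) (h ξ)) ↔
      ∀ ξ, ∑' i, ‖x i ξ‖ₑ ^ 2 = quadForm h ξ := by
  simp only [← quadForm_adjoint_mul_self]
  exact hasSum_iff_tsum_quadForm (fun i => isPositive_adjoint_comp_self (x i)) hh

lemma kpEquiv_iff_tsum {h k : H →L[ℂ] H} (hh : h.IsPositive) (hk : k.IsPositive) :
    KPEquiv M h k ↔ ∃ (ι : Type u) (x : ι → H →L[ℂ] H), (∀ i, x i ∈ M) ∧
      (∀ ξ, ∑' i, ‖x i ξ‖ₑ ^ 2 = quadForm h ξ) ∧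
      ∀ ξ, ∑' i, ‖adjoint (x i) ξ‖ₑ ^ 2 = quadForm k ξ := by
  refine exists₂_congr fun ι x => and_congr_right fun _ => and_congr
    (hasSum_adjoint_mul_self_iff x hh) ?_
  simpa only [adjoint_adjoint] using hasSum_adjoint_mul_self_iff (fun i => adjoint (x i)) hk

lemma KPEquiv.refl {h : H →L[ℂ] H} (hM : h ∈ M) (hh : h.IsPositive) : KPEquiv M h h := by
  refine (kpEquiv_iff_tsum hh hh).2 ⟨PUnit, fun _ => CFC.sqrt h, fun _ => sqrt_mem hM, ?_⟩
  simp only [adjoint_sqrt, enorm_sqrt_apply_sq hh, tsum_fintype, Finset.univ_unique,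
    Finset.sum_const, Finset.card_singleton, one_smul, implies_true, and_self]

lemma KPEquiv.symm {h k : H →L[ℂ] H} (hhk : KPEquiv M h k) : KPEquiv M k h := by
  obtain ⟨ι, x, hx, hxh, hxk⟩ := hhk
  exact ⟨ι, fun i => adjoint (x i), fun i => adjoint_mem (hx i), by simpa only [adjoint_adjoint],
    by simpa only [adjoint_adjoint]⟩

lemma KPEquiv.of_tsum_quadForm_eq {κ : Type} {a b : κ → H →L[ℂ] H} {s t : H →L[ℂ] H}
    (ha : ∀ i, (a i).IsPositive) (hb : ∀ i, (b i).IsPositive) (hs : s.IsPositive)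
    (ht : t.IsPositive) (hab : ∀ i, KPEquiv M (a i) (b i))
    (has : ∀ ξ, ∑' i, quadForm (a i) ξ = quadForm s ξ)
    (hbt : ∀ ξ, ∑' i, quadForm (b i) ξ = quadForm t ξ) : KPEquiv M s t := by
  choose ι x hx hxa hxb using fun i => (kpEquiv_iff_tsum (ha i) (hb i)).1 (hab i)
  refine (kpEquiv_iff_tsum hs ht).2
    ⟨Σ i, ι i, fun j => x j.1 j.2, fun j => hx j.1 j.2, fun ξ => ?_, fun ξ => ?_⟩
  · rw [ENNReal.tsum_sigma', ← has]
    exact tsum_congr fun i => hxa i ξ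
  · rw [ENNReal.tsum_sigma', ← hbt]
    exact tsum_congr fun i => hxb i ξ

lemma KPEquiv.add {a b c d : H →L[ℂ] H} (ha : a.IsPositive) (hb : b.IsPositive)
    (hc : c.IsPositive) (hd : d.IsPositive) (hab : KPEquiv M a b) (hcd : KPEquiv M c d) :
    KPEquiv M (a + c) (b + d) :=
  .of_tsum_quadForm_eq (a := fun i => bif i then a else c) (b := fun i => bif i then b else d)
    (Bool.rec hc ha) (Bool.rec hd hb) (ha.add hc) (hb.add hd) (Bool.rec hcd hab)
    (fun ξ => by simp [quadForm_add ha hc])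
    (fun ξ => by simp [quadForm_add hb hd])

lemma KPEquiv.smul {c : ℝ} (hc : 0 ≤ c) {h k : H →L[ℂ] H} (hhk : KPEquiv M h k) :
    KPEquiv M ((c : ℂ) • h) ((c : ℂ) • k) := by
  obtain ⟨ι, x, hx, hxh, hxk⟩ := hhk
  have hmul (a b : H →L[ℂ] H) :
      (Real.sqrt c : ℂ) • a * (Real.sqrt c : ℂ) • b = (c : ℂ) • (a * b) := by
    rw [smul_mul_smul_comm, ← Complex.ofReal_mul, Real.mul_self_sqrt hc]
  have hadj (i : ι) : adjoint ((Real.sqrt c : ℂ) • x i) = (Real.sqrt c : ℂ) • adjoint (x i) := by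
    rw [← star_eq_adjoint, star_smul, Complex.star_def, Complex.conj_ofReal, star_eq_adjoint]
  refine ⟨ι, fun i => (Real.sqrt c : ℂ) • x i, fun i => M.toStarSubalgebra.smul_mem (hx i) _, ?_⟩
  simp only [hadj, hmul]
  exact ⟨fun ξ => (hxh ξ).const_smul (c : ℂ), fun ξ => (hxk ξ).const_smul (c : ℂ)⟩

lemma KPEquiv.centralProj_mul {p h k : H →L[ℂ] H} (hp : IsCentralProj M p)
    (hhk : KPEquiv M h k) : KPEquiv M (p * h) (p * k) := by
  obtain ⟨ι, x, hx, hxh, hxk⟩ := hhk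
  obtain ⟨⟨hpM, hpsa, hpp⟩, hpc⟩ := hp
  have hadj (i : ι) : adjoint (p * x i) = p * adjoint (x i) := by
    rw [adjoint_mul, hpsa.adjoint_eq, ← hpc _ (adjoint_mem (hx i))]
  have hmul {a b : H →L[ℂ] H} (ha : a ∈ M) : p * a * (p * b) = p * (a * b) := by
    rw [hpc a ha, mul_assoc, ← mul_assoc p p, hpp, ← mul_assoc, ← hpc a ha, mul_assoc]
  refine ⟨ι, fun i => p * x i, fun i => mul_mem hpM (hx i), ?_⟩
  simp only [hadj, hmul (hx _), hmul (adjoint_mem (hx _))]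
  exact ⟨fun ξ => (hxh ξ).mapL p, fun ξ => (hxk ξ).mapL p⟩

lemma eq_zero_of_kpEquiv_zero {k : H →L[ℂ] H} (hk : KPEquiv M 0 k) : k = 0 := by
  obtain ⟨ι, x, -, hx0, hxk⟩ := hk
  have hx (i : ι) : x i = 0 := by
    ext ξ
    have hsum : ∑' i, ‖x i ξ‖ₑ ^ 2 = 0 := by
      rw [(hasSum_adjoint_mul_self_iff x isPositive_zero).1 hx0, quadForm_zero_left]
    exact enorm_eq_zero.1 (pow_eq_zero_iff two_ne_zero |>.1 (ENNReal.tsum_eq_zero.1 hsum i))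
  ext ξ
  exact (hxk ξ).unique (by simpa only [hx, zero_mul, zero_apply] using hasSum_zero)

end Equivalence

section Riesz

lemma adjoint_apply_mem_orthogonal_orthogonal_range_sqrt {k y : H →L[ℂ] H} (hk : k.IsPositive)
    (hy : ∀ ξ, ‖y ξ‖ₑ ^ 2 ≤ quadForm k ξ) (ξ : H) : adjoint y ξ ∈ (CFC.sqrt k).rangeᗮᗮ := by
  refine (Submodule.mem_orthogonal _ _).2 fun ζ hζ => ?_
  rw [orthogonal_range, LinearMap.mem_ker, adjoint_sqrt] at hζ
  have hyζ : ‖y ζ‖ₑ ^ 2 ≤ 0 := (hy ζ).trans_eq <| by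
    rw [← enorm_sqrt_apply_sq hk]
    simpa using hζ
  rw [adjoint_inner_right, show y ζ = 0 by simpa using hyζ, inner_zero_left]

/- `v i` are the coordinates of the partial isometry in the polar decomposition of the column of
the `adjoint (x i)`, whose absolute value is `√k`; the bound on `y` puts the range of `adjoint y`
in its initial space. -/
lemma exists_mem_conj_eq {ι : Type*} {x : ι → H →L[ℂ] H} (hx : ∀ i, x i ∈ M) {k : H →L[ℂ] H}
    (hkM : k ∈ M) (hk : k.IsPositive) (hxk : ∀ ξ, ∑' i, ‖adjoint (x i) ξ‖ₑ ^ 2 = quadForm k ξ) :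
    ∃ v : ι → H →L[ℂ] H, (∀ i, v i ∈ M) ∧
      (∀ i ξ, quadForm k (adjoint (v i) ξ) = ‖x i ξ‖ₑ ^ 2) ∧
      ∀ y : H →L[ℂ] H, (∀ ξ, ‖y ξ‖ₑ ^ 2 ≤ quadForm k ξ) →
        ∀ ξ, ∑' i, ‖v i (adjoint y ξ)‖ₑ ^ 2 = ‖adjoint y ξ‖ₑ ^ 2 := by
  set r := CFC.sqrt k
  obtain ⟨X, hX⟩ := exists_column (x := fun i => adjoint (x i)) ‖k‖₊ fun ξ =>
    (hxk ξ).trans_le (quadForm_le_nnnorm k ξ)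
  have hnorm (ξ : H) : ‖X ξ‖ = ‖r ξ‖ := by
    have hsq : ‖X ξ‖ₑ ^ 2 = ‖r ξ‖ₑ ^ 2 := by
      rw [← lp_tsum_enorm_sq, enorm_sqrt_apply_sq hk, ← hxk]
      simp only [hX]
    rw [← toReal_enorm, ← toReal_enorm, (ENNReal.pow_right_strictMono two_ne_zero).injective hsq]
  obtain ⟨V, hVr, hViso, hV0⟩ := exists_partialIsometry_of_norm_eq hnorm
  let v (i : ι) : H →L[ℂ] H := lp.evalCLM ℂ (fun _ => H) 2 i ∘L V
  have hvr (i : ι) : v i * r = adjoint (x i) := by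
    ext ξ
    exact (congrArg (· i) (congrArg Subtype.val (hVr ξ))).trans (hX ξ i)
  refine ⟨v, fun i => ?_, fun i ξ => ?_, fun y hy ξ => ?_⟩
  · refine mem_of_mul_mem_of_eq_zero_on_orthogonal (sqrt_mem hkM) ?_ fun η hη => ?_
    · exact hvr i ▸ adjoint_mem (hx i)
    · exact congrArg (lp.evalCLM ℂ (fun _ => H) 2 i) (hV0 η hη)
  · have hrv : r * adjoint (v i) = x i := by
      rw [← adjoint_adjoint (x i), ← hvr, adjoint_mul, adjoint_sqrt]
    rw [← enorm_sqrt_apply_sq hk, ← hrv, mul_apply_eq_comp]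
  · refine (lp_tsum_enorm_sq (V (adjoint y ξ))).trans ?_
    rw [← ofReal_norm, hViso _ (adjoint_apply_mem_orthogonal_orthogonal_range_sqrt hk hy ξ),
      ofReal_norm]

lemma KPEquiv.of_conj {ι : Type u} {v : ι → H →L[ℂ] H} (hv : ∀ i, v i ∈ M) {g k l : H →L[ℂ] H}
    (hg : g.IsPositive) (hk : k.IsPositive) (hl : l.IsPositive)
    (hviso : ∀ y : H →L[ℂ] H, (∀ ξ, ‖y ξ‖ₑ ^ 2 ≤ quadForm k ξ) →
      ∀ ξ, ∑' i, ‖v i (adjoint y ξ)‖ₑ ^ 2 = ‖adjoint y ξ‖ₑ ^ 2)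
    (hvg : ∀ ξ, ∑' i, quadForm k (adjoint (v i) ξ) = quadForm g ξ) (hkl : KPEquiv M k l) :
    KPEquiv M g l := by
  obtain ⟨κ, y, hy, hyk, hyl⟩ := (kpEquiv_iff_tsum hk hl).1 hkl
  refine (kpEquiv_iff_tsum hg hl).2 ⟨ι × κ, fun p => y p.2 * adjoint (v p.1),
    fun p => mul_mem (hy _) (adjoint_mem (hv _)), fun ξ => ?_, fun ξ => ?_⟩
  · rw [ENNReal.tsum_prod', ← hvg]
    simp only [mul_apply_eq_comp, hyk]
  · have hadj (i : ι) (j : κ) : adjoint (y j * adjoint (v i)) ξ = v i (adjoint (y j) ξ) := by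
      rw [adjoint_mul, adjoint_adjoint, mul_apply_eq_comp]
    have hbound (j : κ) (η : H) : ‖y j η‖ₑ ^ 2 ≤ quadForm k η :=
      hyk η ▸ ENNReal.le_tsum (f := fun j => ‖y j η‖ₑ ^ 2) j
    rw [ENNReal.tsum_prod', ENNReal.tsum_comm, ← hyl]
    simp only [hadj, hviso _ (hbound _)]

lemma KPEquiv.trans {g k l : H →L[ℂ] H} (hkM : k ∈ M) (hg : g.IsPositive) (hk : k.IsPositive)
    (hl : l.IsPositive) (hgk : KPEquiv M g k) (hkl : KPEquiv M k l) : KPEquiv M g l := by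
  obtain ⟨ι, x, hx, hxg, hxk⟩ := (kpEquiv_iff_tsum hg hk).1 hgk
  obtain ⟨v, hv, hvx, hviso⟩ := exists_mem_conj_eq hx hkM hk hxk
  exact .of_conj hv hg hk hl hviso (by simpa only [hvx]) hkl

lemma KPEquiv.exists_add_eq {g k₁ k₂ : H →L[ℂ] H} (hk₁M : k₁ ∈ M) (hk₂M : k₂ ∈ M)
    (hg : g.IsPositive) (hk₁ : k₁.IsPositive) (hk₂ : k₂.IsPositive)
    (hgk : KPEquiv M g (k₁ + k₂)) :
    ∃ g₁ g₂, g₁ ∈ M ∧ g₂ ∈ M ∧ g₁.IsPositive ∧ g₂.IsPositive ∧ g₁ + g₂ = g ∧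
      KPEquiv M g₁ k₁ ∧ KPEquiv M g₂ k₂ := by
  obtain ⟨ι, x, hx, hxg, hxk⟩ := (kpEquiv_iff_tsum hg (hk₁.add hk₂)).1 hgk
  obtain ⟨v, hv, hvx, hviso⟩ := exists_mem_conj_eq hx (add_mem hk₁M hk₂M) (hk₁.add hk₂) hxk
  have hvg (ξ : H) : ∑' i, quadForm (k₁ + k₂) (adjoint (v i) ξ) = quadForm g ξ := by
    simp only [hvx, hxg]
  have hpiece {m : H →L[ℂ] H} (hmM : m ∈ M) (hm : m.IsPositive) (hmk : m ≤ k₁ + k₂) :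
      ∃ s ∈ M, s.IsPositive ∧ (∀ ξ, ∑' i, quadForm m (adjoint (v i) ξ) = quadForm s ξ) ∧
        KPEquiv M s m := by
    obtain ⟨s, hsM, hs, -, hvs⟩ := exists_mem_tsum_quadForm_eq
      (a := fun i => v i * m * adjoint (v i))
      (fun i => mul_mem (mul_mem (hv i) hmM) (adjoint_mem (hv i)))
      (fun i => hm.conj_adjoint (v i)) hg fun ξ => by
        simp only [quadForm_mul_mul_adjoint, ← hvg]
        exact ENNReal.tsum_le_tsum fun i => quadForm_mono hmk _
    simp only [quadForm_mul_mul_adjoint] at hvs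
    exact ⟨s, hsM, hs, hvs, .of_conj hv hs hm hm
      (fun y hy => hviso y fun ξ => (hy ξ).trans (quadForm_mono hmk ξ)) hvs (.refl hmM hm)⟩
  obtain ⟨g₁, hg₁M, hg₁, hvg₁, hgk₁⟩ := hpiece hk₁M hk₁
    (le_add_of_nonneg_right ((nonneg_iff_isPositive _).2 hk₂))
  obtain ⟨g₂, hg₂M, hg₂, hvg₂, hgk₂⟩ := hpiece hk₂M hk₂
    (le_add_of_nonneg_left ((nonneg_iff_isPositive _).2 hk₁))
  refine ⟨g₁, g₂, hg₁M, hg₂M, hg₁, hg₂, ?_, hgk₁, hgk₂⟩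
  refine eq_of_quadForm_eq (hg₁.add hg₂) hg fun ξ => ?_
  rw [quadForm_add hg₁ hg₂, ← hvg₁, ← hvg₂, ← ENNReal.tsum_add, ← hvg]
  exact tsum_congr fun i => (quadForm_add hk₁ hk₂ _).symm

end Riesz

section Finiteness

lemma KPFinite.mono {g h : H →L[ℂ] H} (hgM : g ∈ M) (hhM : h ∈ M) (hg : g.IsPositive)
    (hgh : g ≤ h) (hfin : KPFinite M h) : KPFinite M g := by
  intro k hkM hk hkg hgk
  have hr : (h - g).IsPositive := hgh
  have hsum : KPEquiv M (g + (h - g)) (k + (h - g)) :=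
    hgk.add hg hk hr hr (.refl (sub_mem hhM hgM) hr)
  rw [add_sub_cancel] at hsum
  have hle : k + (h - g) ≤ h := by
    simpa only [add_sub_cancel] using add_le_add_left (show k ≤ g from hkg) (h - g)
  have := hfin _ (add_mem hkM (sub_mem hhM hgM)) (hk.add hr) hle hsum
  exact add_right_cancel (this.trans (add_sub_cancel g h).symm)

lemma KPFinite.of_kpEquiv {g h : H →L[ℂ] H} (hhM : h ∈ M) (hg : g.IsPositive)
    (hh : h.IsPositive) (hgh : KPEquiv M g h) (hfin : KPFinite M g) : KPFinite M h := by
  intro k hkM hk hkh hhk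
  have hr : (h - k).IsPositive := hkh
  obtain ⟨g₁, g₂, hg₁M, -, hg₁, hg₂, hadd, hgk₁, hgk₂⟩ :=
    KPEquiv.exists_add_eq hkM (sub_mem hhM hkM) hg hk hr (by rwa [add_sub_cancel])
  have hgg₁ : KPEquiv M g g₁ :=
    (hgh.trans hhM hg hh hk hhk).trans hkM hg hk hg₁ hgk₁.symm
  have hg₁g : g₁ ≤ g := hadd ▸ le_add_of_nonneg_right ((nonneg_iff_isPositive _).2 hg₂)
  have hg₂0 : g₂ = 0 :=
    add_eq_left.1 (hadd.trans (hfin g₁ hg₁M hg₁ hg₁g hgg₁).symm)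
  rw [hg₂0] at hgk₂
  exact (sub_eq_zero.1 (eq_zero_of_kpEquiv_zero hgk₂)).symm

lemma KPFinite.of_smul {c : ℝ} (hc : 0 < c) {a : H →L[ℂ] H}
    (hfin : KPFinite M ((c : ℂ) • a)) : KPFinite M a := by
  intro b hbM hb hba hab
  refine (smul_right_injective _ (Complex.ofReal_ne_zero.2 hc.ne')) <|
    hfin _ (M.toStarSubalgebra.smul_mem hbM _) (isPositive_ofReal_smul hc.le hb) ?_
      (hab.smul hc.le)
  rw [OpLE, ← smul_sub]
  exact isPositive_ofReal_smul hc.le hba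

lemma KPProperlyInfinite.smul {c : ℝ} (hc : 0 < c) {k : H →L[ℂ] H}
    (hk : KPProperlyInfinite M k) : KPProperlyInfinite M ((c : ℂ) • k) := by
  have hc0 : (c : ℂ) ≠ 0 := Complex.ofReal_ne_zero.2 hc.ne'
  refine ⟨smul_ne_zero hc0 hk.1, fun z hz hfin => ?_⟩
  rw [mul_smul_comm] at hfin ⊢
  rw [hk.2 z hz (hfin.of_smul hc), smul_zero]

end Finiteness

section MaximalFamily

lemma exists_maximal_of_tsum_le {α ι : Type*} (f : ι → α → ENNReal) (B : ι → ENNReal) :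
    ∃ S : Set α, Maximal (fun S : Set α => ∀ i, ∑' s : S, f i s ≤ B i) S := by
  refine zorn_subset {S : Set α | ∀ i, ∑' s : S, f i s ≤ B i} fun c hc hchain => ?_
  refine ⟨⋃₀ c, fun i => ?_, fun S hS => Set.subset_sUnion_of_mem hS⟩
  rw [ENNReal.tsum_eq_iSup_sum]
  refine iSup_le fun F => ?_
  obtain rfl | hne := c.eq_empty_or_nonempty
  · have : IsEmpty (⋃₀ (∅ : Set (Set α))) := by simp
    simp [Finset.eq_empty_of_isEmpty F]
  obtain ⟨S, hSc, hFS⟩ := DirectedOn.exists_mem_subset_of_finite_of_subset_sUnion hne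
    hchain.directedOn (F.finite_toSet.image Subtype.val) (by
      rintro _ ⟨s, -, rfl⟩
      exact s.2)
  calc ∑ s ∈ F, f i s = ∑' s : (Subtype.val '' (F : Set (⋃₀ c))), f i s := by
        rw [tsum_image (f i) Subtype.val_injective.injOn, ← Finset.tsum_subtype]
        rfl
    _ ≤ ∑' s : S, f i s := ENNReal.tsum_mono_subtype (f i) hFS
    _ ≤ B i := hc hSc i

-- The factor `ℕ` allows repetitions, so that a nonzero element still fitting under `B` is absurd.
lemma exists_set_prod_nat_tsum_le {α ι : Type*} (f : ι → α → ENNReal) {B : ι → ENNReal}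
    (hB : ∀ i, B i ≠ ⊤) :
    ∃ S : Set (α × ℕ), (∀ i, ∑' s : S, f i s.1.1 ≤ B i) ∧
      ∀ a, (∀ i, ∑' s : S, f i s.1.1 + f i a ≤ B i) → ∀ i, f i a = 0 := by
  obtain ⟨S, hS⟩ := exists_maximal_of_tsum_le (fun i (s : α × ℕ) => f i s.1) B
  refine ⟨S, hS.prop, fun a ha i => ?_⟩
  have hmem (n : ℕ) : (a, n) ∈ S := by
    refine hS.mem_of_prop_insert fun i => ?_
    rw [Set.insert_eq, Set.union_comm]
    refine (ENNReal.tsum_union_le (fun s : α × ℕ => f i s.1) _ _).trans ?_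
    rw [tsum_singleton (a, n) fun s : α × ℕ => f i s.1]
    exact ha i
  by_contra hne
  have htop : ∑' _ : ℕ, f i a ≤ ∑' s : S, f i s.1.1 :=
    ENNReal.tsum_comp_le_tsum_of_injective (f := fun n => (⟨(a, n), hmem n⟩ : S))
      (fun m n hmn => congrArg Prod.snd (congrArg Subtype.val hmn)) fun s : S => f i s.1.1
  rw [ENNReal.tsum_const_eq_top_of_ne_zero hne] at htop
  exact hB i (top_le_iff.1 (htop.trans (hS.prop i)))

end MaximalFamily

section Comparison

lemma exists_kpEquiv_le_maximal {h k : H →L[ℂ] H} (hh : h.IsPositive) (hk : k.IsPositive) :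
    ∃ a b, a ∈ M ∧ b ∈ M ∧ a.IsPositive ∧ b.IsPositive ∧ a ≤ h ∧ b ≤ k ∧ KPEquiv M a b ∧
      ∀ t ∈ M, (∀ ξ, ‖t ξ‖ₑ ^ 2 ≤ quadForm (h - a) ξ) →
        (∀ ξ, ‖adjoint t ξ‖ₑ ^ 2 ≤ quadForm (k - b) ξ) → t = 0 := by
  obtain ⟨S, hSle, hSmax⟩ := exists_set_prod_nat_tsum_le
    (Sum.elim (fun ξ (x : M) => ‖x.1 ξ‖ₑ ^ 2) fun ξ x => ‖adjoint x.1 ξ‖ₑ ^ 2)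
    (B := Sum.elim (quadForm h) (quadForm k))
    (Sum.rec (quadForm_ne_top h) (quadForm_ne_top k))
  let x (s : S) : H →L[ℂ] H := s.1.1
  have hx (s : S) : x s ∈ M := s.1.1.2
  obtain ⟨a, haM, ha, hah, hxa⟩ := exists_mem_tsum_quadForm_eq
    (a := fun s => adjoint (x s) * x s) (fun s => mul_mem (adjoint_mem (hx s)) (hx s))
    (fun s => isPositive_adjoint_comp_self (x s)) hh fun ξ => by
      simp only [quadForm_adjoint_mul_self]
      exact hSle (.inl ξ)
  obtain ⟨b, hbM, hb, hbk, hxb⟩ := exists_mem_tsum_quadForm_eq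
    (a := fun s => adjoint (adjoint (x s)) * adjoint (x s))
    (fun s => mul_mem (adjoint_mem (adjoint_mem (hx s))) (adjoint_mem (hx s)))
    (fun s => isPositive_adjoint_comp_self (adjoint (x s))) hk fun ξ => by
      simp only [quadForm_adjoint_mul_self]
      exact hSle (.inr ξ)
  simp only [quadForm_adjoint_mul_self] at hxa hxb
  refine ⟨a, b, haM, hbM, ha, hb, hah, hbk,
    (kpEquiv_iff_tsum ha hb).2 ⟨S, x, hx, hxa, hxb⟩, fun t htM hth htk => ?_⟩
  have ht := hSmax ⟨t, htM⟩ (Sum.rec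
    (fun ξ => ((add_le_add (hxa ξ).le (hth ξ)).trans_eq (quadForm_add_quadForm_sub ha hah ξ)))
    (fun ξ => ((add_le_add (hxb ξ).le (htk ξ)).trans_eq (quadForm_add_quadForm_sub hb hbk ξ))))
  ext ξ
  exact enorm_eq_zero.1 (pow_eq_zero_iff two_ne_zero |>.1 (ht (.inl ξ)))

omit [CompleteSpace H] in
lemma eventually_enorm_smul_apply_sq_le (A : H →L[ℂ] H) :
    ∀ᶠ c : ℝ in 𝓝 0, ∀ ξ, ‖((c : ℂ) • A) ξ‖ₑ ^ 2 ≤ ‖ξ‖ₑ ^ 2 := by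
  have hlim : Tendsto (fun c : ℝ => ‖(c : ℂ) • A‖) (𝓝 0) (𝓝 0) := by
    have hcont : Continuous fun c : ℝ => ‖(c : ℂ) • A‖ := by fun_prop
    simpa using hcont.tendsto 0
  filter_upwards [hlim.eventually_le_const one_pos] with c hc ξ
  gcongr
  rw [enorm_le_iff_norm_le]
  simpa using le_of_opNorm_le _ hc ξ

lemma mul_mul_eq_zero_of_maximal {c d : H →L[ℂ] H} (hcM : c ∈ M) (hdM : d ∈ M)
    (hc : c.IsPositive) (hd : d.IsPositive)
    (hmax : ∀ t ∈ M, (∀ ξ, ‖t ξ‖ₑ ^ 2 ≤ quadForm c ξ) →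
      (∀ ξ, ‖adjoint t ξ‖ₑ ^ 2 ≤ quadForm d ξ) → t = 0) {m : H →L[ℂ] H} (hm : m ∈ M) :
    c * m * d = 0 := by
  set r := CFC.sqrt c with hr
  set s := CFC.sqrt d with hs
  obtain ⟨ε, ⟨hεs, hεr⟩, hε⟩ :=
    (((eventually_enorm_smul_apply_sq_le (s * adjoint m)).and
      (eventually_enorm_smul_apply_sq_le (r * m))).filter_mono nhdsWithin_le_nhds |>.and
      (self_mem_nhdsWithin (a := (0 : ℝ)) (s := {0}ᶜ))).exists
  have hadj : adjoint ((ε : ℂ) • (r * m * s)) = (ε : ℂ) • (s * adjoint m * r) := by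
    rw [map_smulₛₗ, Complex.conj_ofReal, adjoint_mul, adjoint_mul, adjoint_sqrt, adjoint_sqrt,
      mul_assoc]
  have ht : (ε : ℂ) • (s * adjoint m * r) = 0 := by
    refine hmax _ (M.toStarSubalgebra.smul_mem
      (mul_mem (mul_mem (sqrt_mem hdM) (adjoint_mem hm)) (sqrt_mem hcM)) _)
      (fun ξ => enorm_sqrt_apply_sq hc ξ ▸ hεs (r ξ)) fun ξ => ?_
    rw [← hadj, adjoint_adjoint]
    exact enorm_sqrt_apply_sq hd ξ ▸ hεr (s ξ)
  have hrms : r * m * s = 0 := by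
    rw [← hadj, map_eq_zero_iff _ adjoint.injective] at ht
    exact (smul_eq_zero.1 ht).resolve_left (Complex.ofReal_ne_zero.2 hε)
  calc c * m * d = r * (r * m * s) * s := by
        rw [← adjoint_sqrt_mul_sqrt hc, ← adjoint_sqrt_mul_sqrt hd, adjoint_sqrt, adjoint_sqrt,
          ← hr, ← hs]
        simp only [mul_assoc]
    _ = 0 := by rw [hrms, mul_zero, zero_mul]

lemma IsCentralProj.compl {p : H →L[ℂ] H} (hp : IsCentralProj M p) : IsCentralProj M (1 - p) := by
  obtain ⟨⟨hpM, hpsa, hpp⟩, hpc⟩ := hp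
  refine ⟨⟨sub_mem (one_mem M) hpM, .sub (.one _) hpsa, IsIdempotentElem.one_sub hpp⟩,
    fun x hx => ?_⟩
  rw [sub_mul, mul_sub, one_mul, mul_one, hpc x hx]

lemma IsCentralProj.isPositive_mul {p a : H →L[ℂ] H} (hp : IsCentralProj M p) (haM : a ∈ M)
    (ha : a.IsPositive) : (p * a).IsPositive := by
  have hpap : p * a * adjoint p = p * a := by
    rw [hp.1.2.1.adjoint_eq, mul_assoc, ← hp.2 a haM, ← mul_assoc, hp.1.2.2]
  exact hpap ▸ ha.conj_adjoint p

lemma IsCentralProj.mul_le_mul {p a b : H →L[ℂ] H} (hp : IsCentralProj M p) (haM : a ∈ M)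
    (hbM : b ∈ M) (hab : a ≤ b) : p * a ≤ p * b := by
  refine (le_def _ _).2 ?_
  rw [← mul_sub]
  exact hp.isPositive_mul (sub_mem hbM haM) hab

lemma IsCentralProj.mul_le {p a : H →L[ℂ] H} (hp : IsCentralProj M p) (haM : a ∈ M)
    (ha : a.IsPositive) : p * a ≤ a := by
  refine (le_def _ _).2 ?_
  simpa only [sub_mul, one_mul] using hp.compl.isPositive_mul haM ha

lemma exists_isCentralProj_mul_eq {c d : H →L[ℂ] H} (hcM : c ∈ M)
    (hcd : ∀ m ∈ M, c * m * d = 0) : ∃ p, IsCentralProj M p ∧ c * p = 0 ∧ p * d = d := by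
  let K : Submodule ℂ H := ⨅ m : M, (c * m.1).ker
  have hK {η : H} : η ∈ K ↔ ∀ m ∈ M, c (m η) = 0 := by simp [K, Submodule.mem_iInf]
  have hKclosed : IsClosed (K : Set H) := by
    simpa only [K, Submodule.coe_iInf] using isClosed_iInter fun m : M => (c * m.1).isClosed_ker
  have : CompleteSpace K := hKclosed.completeSpace_coe
  have hproj : IsStarProjection K.starProjection := isStarProjection_starProjection
  have hM : K.starProjection ∈ M := by
    refine (VonNeumannAlgebra.IsStarProjection.mem_iff hproj _).2 fun n hn => ?_
    rw [Submodule.range_starProjection]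
    refine fun η hη => hK.2 fun m hm => ?_
    have hcomm : n (c (m η)) = c (m (n η)) := congr($(commutant_mul_comm (mul_mem hcM hm) hn) η)
    exact hcomm.symm.trans (by rw [hK.1 hη m hm, map_zero])
  have hM' : K.starProjection ∈ M.commutant := by
    refine (VonNeumannAlgebra.IsStarProjection.mem_iff hproj _).2 fun n hn => ?_
    rw [Submodule.range_starProjection]
    rw [VonNeumannAlgebra.commutant_commutant] at hn
    exact fun η hη => hK.2 fun m hm => hK.1 hη (m * n) (mul_mem hm hn)
  refine ⟨K.starProjection, ⟨⟨hM, hproj.isSelfAdjoint, hproj.isIdempotentElem⟩,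
    fun x hx => commutant_mul_comm hx hM'⟩, ?_, ?_⟩
  · ext ξ
    exact hK.1 (K.starProjection_apply_mem ξ) 1 (one_mem M)
  · ext ξ
    exact Submodule.starProjection_eq_self_iff.2 (hK.2 fun m hm => congr($(hcd m hm) ξ))

theorem exists_kpEquiv_isCentralProj {h k : H →L[ℂ] H} (hhM : h ∈ M) (hkM : k ∈ M)
    (hh : h.IsPositive) (hk : k.IsPositive) :
    ∃ a b p, a ∈ M ∧ b ∈ M ∧ a.IsPositive ∧ b.IsPositive ∧ a ≤ h ∧ b ≤ k ∧ KPEquiv M a b ∧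
      IsCentralProj M p ∧ p * h = p * a ∧ (1 - p) * k = (1 - p) * b := by
  obtain ⟨a, b, haM, hbM, ha, hb, hah, hbk, hab, hmax⟩ := exists_kpEquiv_le_maximal (M := M) hh hk
  have hcM : h - a ∈ M := sub_mem hhM haM
  obtain ⟨p, hp, hpc, hpd⟩ := exists_isCentralProj_mul_eq hcM fun m hm =>
    mul_mul_eq_zero_of_maximal hcM (sub_mem hkM hbM) hah hbk hmax hm
  refine ⟨a, b, p, haM, hbM, ha, hb, hah, hbk, hab, hp, ?_, ?_⟩
  · rw [← sub_eq_zero, ← mul_sub, hp.2 _ hcM, hpc]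
  · rw [← sub_eq_zero, ← mul_sub, sub_mul, one_mul, hpd, sub_self]

end Comparison

/-- Kadison–Pedersen subequivalence `h ≲ k`: `h` is equivalent to an element of `M₊` below `k`. -/
def KPLE (M : VonNeumannAlgebra H) (h k : H →L[ℂ] H) : Prop :=
  ∃ k', k' ∈ M ∧ k'.IsPositive ∧ OpLE k' k ∧ KPEquiv M h k'

section Subequivalence

lemma IsCentralProj.mul_eq_of_le {p a h : H →L[ℂ] H} (hp : IsCentralProj M p) (haM : a ∈ M)
    (hhM : h ∈ M) (ha : a.IsPositive) (hah : a ≤ h) (hph : p * h = h) : p * a = a := by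
  have hle : (1 - p) * a ≤ 0 := by
    simpa only [sub_mul, one_mul, hph, sub_self] using hp.compl.mul_le_mul haM hhM hah
  have h0 : (1 - p) * a = 0 :=
    le_antisymm hle ((nonneg_iff_isPositive _).2 (hp.compl.isPositive_mul haM ha))
  rwa [sub_mul, one_mul, sub_eq_zero, eq_comm] at h0

lemma KPFinite.kpLE_of_kpProperlyInfinite {h k : H →L[ℂ] H} (hhM : h ∈ M) (hkM : k ∈ M)
    (hh : h.IsPositive) (hk : k.IsPositive) (hfin : KPFinite M h) (hinf : KPProperlyInfinite M k)
    (hsupp : ∀ p, IsCentralProj M p → p * k = k → p * h = h) : KPLE M h k := by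
  obtain ⟨a, b, p, haM, hbM, ha, hb, hah, hbk, hab, hp, hpa, hpb⟩ :=
    exists_kpEquiv_isCentralProj hhM hkM hh hk
  have hqkM : (1 - p) * k ∈ M := mul_mem hp.compl.1.1 hkM
  have hqaM : (1 - p) * a ∈ M := mul_mem hp.compl.1.1 haM
  have hqa : ((1 - p) * a).IsPositive := hp.compl.isPositive_mul haM ha
  have hqk_fin : KPFinite M ((1 - p) * k) := by
    refine KPFinite.of_kpEquiv hqkM hqa (hp.compl.isPositive_mul hkM hk)
      (hpb ▸ hab.centralProj_mul hp.compl) ?_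
    exact hfin.mono hqaM hhM hqa ((hp.compl.mul_le haM ha).trans hah)
  have hpk : p * k = k := by
    have := hinf.2 _ hp.compl hqk_fin
    rwa [sub_mul, one_mul, sub_eq_zero, eq_comm] at this
  have hpa_h : p * a = h := hpa.symm.trans (hsupp p hp hpk)
  exact ⟨p * b, mul_mem hp.1.1 hbM, hp.isPositive_mul hbM hb, (hp.mul_le hbM hb).trans hbk,
    hpa_h ▸ hab.centralProj_mul hp⟩

lemma KPLE.of_tsum_quadForm {κ : Type} {f g : κ → H →L[ℂ] H} {h k : H →L[ℂ] H}
    (hf : ∀ n, (f n).IsPositive) (hh : h.IsPositive) (hk : k.IsPositive)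
    (hfg : ∀ n, KPLE M (f n) (g n)) (hfh : ∀ ξ, ∑' n, quadForm (f n) ξ = quadForm h ξ)
    (hgk : ∀ ξ, ∑' n, quadForm (g n) ξ ≤ quadForm k ξ) : KPLE M h k := by
  choose g' hg'M hg' hg'g hfg' using hfg
  obtain ⟨s, hsM, hs, hsk, hg's⟩ := exists_mem_tsum_quadForm_eq hg'M hg' hk fun ξ =>
    (ENNReal.tsum_le_tsum fun n => quadForm_mono (hg'g n) ξ).trans (hgk ξ)
  exact ⟨s, hsM, hs, hsk, .of_tsum_quadForm_eq hf hg' hh hs hfg' hfh hg's⟩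

omit [CompleteSpace H] in
lemma tsum_quadForm_geometric_smul (k : H →L[ℂ] H) (ξ : H) :
    ∑' n : ℕ, quadForm (((2⁻¹ ^ (n + 1) : ℝ) : ℂ) • k) ξ = quadForm k ξ := by
  have hgeom : ∑' n : ℕ, ENNReal.ofReal (2⁻¹ ^ (n + 1)) = 1 := by
    simp_rw [ENNReal.ofReal_pow (show (0 : ℝ) ≤ 2⁻¹ by positivity)]
    rw [ENNReal.tsum_geometric_add_one, ENNReal.ofReal_inv_of_pos two_pos, ENNReal.ofReal_ofNat,
      ENNReal.one_sub_inv_two, inv_inv, ENNReal.inv_mul_cancel two_ne_zero ENNReal.ofNat_ne_top]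
  simp_rw [quadForm_smul (show (0 : ℝ) ≤ 2⁻¹ ^ (_ + 1) by positivity), ENNReal.tsum_mul_right,
    hgeom, one_mul]

end Subequivalence

end VonNeumannAlgebra

theorem kp_lessapprox_general (M : VonNeumannAlgebra H) (h k : H →L[ℂ] H)
    (hh : h ∈ M) (hk : k ∈ M) (hpos : h.IsPositive) (kpos : k.IsPositive)
    (hsupp : ∀ p, IsCentralProj M p → p * k = k → p * h = h)
    (kinf : KPProperlyInfinite M k)
    (hsum : ∃ f : ℕ → H →L[ℂ] H, (∀ n, f n ∈ M ∧ (f n).IsPositive ∧ KPFinite M (f n)) ∧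
      ∀ ξ : H, HasSum (fun n => f n ξ) (h ξ)) : KPLE M h k := by
  obtain ⟨f, hf, hfh⟩ := hsum
  choose hfM hfpos hffin using hf
  have hqf := tsum_quadForm_of_hasSum hfpos hfh
  have hfle (n : ℕ) : f n ≤ h := le_of_quadForm_le (hfpos n) hpos fun ξ =>
    hqf ξ ▸ ENNReal.le_tsum (f := fun n => quadForm (f n) ξ) n
  have hpiece (n : ℕ) : KPLE M (f n) (((2⁻¹ ^ (n + 1) : ℝ) : ℂ) • k) := by
    have hc : (0 : ℝ) < 2⁻¹ ^ (n + 1) := by positivity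
    refine (hffin n).kpLE_of_kpProperlyInfinite (hfM n) (M.toStarSubalgebra.smul_mem hk _)
      (hfpos n) (isPositive_ofReal_smul hc.le kpos) (kinf.smul hc) fun p hp hpk => ?_
    rw [mul_smul_comm] at hpk
    have hpk' := smul_right_injective _ (Complex.ofReal_ne_zero.2 hc.ne') hpk
    exact hp.mul_eq_of_le (hfM n) hh (hfpos n) (hfle n) (hsupp p hp hpk')
  exact .of_tsum_quadForm hfpos hpos kpos hpiece hqf fun ξ => (tsum_quadForm_geometric_smul k ξ).le

/-- Let `h, k ∈ M₊` have equal central support, with `k` properly infinite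
and `h` a countable sum of finite positive elements.  Then `h ≲ k` in the Kadison–Pedersen
ordering: `h ≈ k'` for some `k' ≤ k`. -/
theorem kp_lessapprox (M : VonNeumannAlgebra H) (h k z : H →L[ℂ] H)
    (hh : h ∈ M) (hk : k ∈ M) (hpos : h.IsPositive) (kpos : k.IsPositive)
    (hcs : IsCentralSupport M h z) (kcs : IsCentralSupport M k z)
    (kinf : KPProperlyInfinite M k)
    (hsum : ∃ f : ℕ → H →L[ℂ] H,
      (∀ n, f n ∈ M ∧ (f n).IsPositive ∧ KPFinite M (f n)) ∧
      ∀ ξ : H, HasSum (fun n => f n ξ) (h ξ)) :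
    ∃ k', k' ∈ M ∧ k'.IsPositive ∧ OpLE k' k ∧ KPEquiv M h k' := by
  refine kp_lessapprox_general M h k hh hk hpos kpos (fun p hp hpk => ?_) kinf hsum
  calc p * h = z * p * h := by rw [hcs.1.2 p hp.1.1, mul_assoc, hcs.2.1]
    _ = h := by rw [kcs.2.2 p hp hpk, hcs.2.1]
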